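/- arXiv:1808.01922 — 2 statements merged into one kernel-verified Lean document; each statement's English description precedes it below -/
import Mathlib

section
/- Let A be a Hopf algebra over a field k with bijective antipode and let P ∈ A be a right group-like projection. Then V_P is a right ideal in N_P^l, a left ideal in N_P^r, a two-sided ideal in N_P, and V_P² = V_P. Moreover V_P = N_P (equivalently V_P = N_P^l, equivalently V_P = N_P^r) if and only if 1 ∈ V_P, and in that case N_P^l = N_P = N_P^r. -/
open scoped TensorProduct

noncomputable section

variable (k : Type*) [Field k] {A : Type*} [Ring A] [HopfAlgebra k A]

/-- `P` is a right group-like projection: a nonzero idempotent with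
`Δ(P)(1 ⊗ P) = P ⊗ P = (1 ⊗ P)Δ(P)`. -/
def IsRightGroupLikeProjection (P : A) : Prop :=
  P ≠ 0 ∧ P * P = P ∧
    Coalgebra.comul (R := k) P * ((1 : A) ⊗ₜ[k] P) = P ⊗ₜ[k] P ∧
    ((1 : A) ⊗ₜ[k] P) * Coalgebra.comul (R := k) P = P ⊗ₜ[k] P

/-- `P` is a left group-like projection: a nonzero idempotent with
`Δ(P)(P ⊗ 1) = P ⊗ P = (P ⊗ 1)Δ(P)`. -/
def IsLeftGroupLikeProjection (P : A) : Prop :=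
  P ≠ 0 ∧ P * P = P ∧
    Coalgebra.comul (R := k) P * (P ⊗ₜ[k] (1 : A)) = P ⊗ₜ[k] P ∧
    (P ⊗ₜ[k] (1 : A)) * Coalgebra.comul (R := k) P = P ⊗ₜ[k] P

/-- A two-sided group-like projection. -/
def IsTwoSidedGroupLikeProjection (P : A) : Prop :=
  IsRightGroupLikeProjection k P ∧ IsLeftGroupLikeProjection k P

/-- `N_P^l = {x : (1 ⊗ P)Δ(x) = x ⊗ P}`. -/
def NPlSet (P : A) : Set A :=
  {x : A | ((1 : A) ⊗ₜ[k] P) * Coalgebra.comul (R := k) x = x ⊗ₜ[k] P}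

/-- `N_P^r = {x : Δ(x)(1 ⊗ P) = x ⊗ P}`. -/
def NPrSet (P : A) : Set A :=
  {x : A | Coalgebra.comul (R := k) x * ((1 : A) ⊗ₜ[k] P) = x ⊗ₜ[k] P}

/-- `N_P = N_P^l ∩ N_P^r`. -/
def NPSet (P : A) : Set A := NPlSet k P ∩ NPrSet k P

/-- `V_P = {(μ ⊗ id)(Δ(P)) : μ ∈ A*}`, the smallest left coideal containing `P`. -/
def VPSet (P : A) : Set A :=
  {x : A | ∃ μ : A →ₗ[k] k,
    x = TensorProduct.lid k A ((TensorProduct.map μ LinearMap.id) (Coalgebra.comul (R := k) P))}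

/-- A submodule `N ⊆ A` is a left coideal if `Δ(N) ⊆ A ⊗ N`. -/
def IsLeftCoideal (N : Submodule k A) : Prop :=
  ∀ x ∈ N, Coalgebra.comul (R := k) x ∈
    LinearMap.range (TensorProduct.map (LinearMap.id : A →ₗ[k] A) N.subtype)

/-- A subalgebra `N ⊆ A` is a left coideal subalgebra if `Δ(N) ⊆ A ⊗ N`. -/
def IsLeftCoidealSubalgebra (N : Subalgebra k A) : Prop :=
  IsLeftCoideal k (Subalgebra.toSubmodule N)

/-- The slice map `μ ⊗ id : A ⊗ A → A`. -/
def leftSlice (μ : A →ₗ[k] k) : A ⊗[k] A →ₗ[k] A :=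
  (TensorProduct.lid k A).toLinearMap ∘ₗ TensorProduct.map μ LinearMap.id

@[simp]
lemma leftSlice_tmul (μ : A →ₗ[k] k) (a b : A) : leftSlice k μ (a ⊗ₜ[k] b) = μ a • b := by
  simp [leftSlice]

lemma mem_VPSet_iff {P v : A} :
    v ∈ VPSet k P ↔ ∃ μ : A →ₗ[k] k, v = leftSlice k μ (Coalgebra.comul (R := k) P) :=
  Iff.rfl

lemma leftSlice_mul_one_tmul (μ : A →ₗ[k] k) (t : A ⊗[k] A) (x : A) :
    leftSlice k μ (t * ((1 : A) ⊗ₜ[k] x)) = leftSlice k μ t * x := by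
  induction t with
  | zero => simp
  | tmul a b => simp
  | add a b ha hb => simp [add_mul, ha, hb]

lemma leftSlice_one_tmul_mul (μ : A →ₗ[k] k) (t : A ⊗[k] A) (x : A) :
    leftSlice k μ (((1 : A) ⊗ₜ[k] x) * t) = x * leftSlice k μ t := by
  induction t with
  | zero => simp
  | tmul a b => simp
  | add a b ha hb => simp [mul_add, ha, hb]

lemma leftSlice_mul_tmul_one (μ : A →ₗ[k] k) (t : A ⊗[k] A) (y : A) :
    leftSlice k μ (t * (y ⊗ₜ[k] (1 : A))) =
      leftSlice k (μ ∘ₗ LinearMap.mulRight k y) t := by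
  induction t with
  | zero => simp
  | tmul a b => simp
  | add a b ha hb => simp [add_mul, ha, hb]

lemma leftSlice_tmul_one_mul (μ : A →ₗ[k] k) (t : A ⊗[k] A) (y : A) :
    leftSlice k μ ((y ⊗ₜ[k] (1 : A)) * t) =
      leftSlice k (μ ∘ₗ LinearMap.mulLeft k y) t := by
  induction t with
  | zero => simp
  | tmul a b => simp
  | add a b ha hb => simp [mul_add, ha, hb]

/-- The slice map `μ ⊗ id ⊗ id` precomposed with `Δ ⊗ id`. -/
def comulSlice (μ : A →ₗ[k] k) : A ⊗[k] A →ₗ[k] A ⊗[k] A :=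
  (leftSlice k μ ∘ₗ Coalgebra.comul).rTensor A

lemma comul_leftSlice_comul (μ : A →ₗ[k] k) (x : A) :
    Coalgebra.comul (R := k) (leftSlice k μ (Coalgebra.comul (R := k) x)) =
      comulSlice k μ (Coalgebra.comul (R := k) x) := by
  have h₁ : ∀ t : A ⊗[k] A, Coalgebra.comul (R := k) (leftSlice k μ t) =
      (leftSlice k μ).rTensor A ((TensorProduct.assoc k A A A).symm
        (Coalgebra.comul.lTensor A t)) := by
    intro t
    induction t with
    | zero => simp
    | add a b ha hb => simp only [map_add, ha, hb]
    | tmul a b =>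
      simp only [leftSlice_tmul, map_smul, LinearMap.lTensor_tmul]
      induction Coalgebra.comul (R := k) b with
      | zero => simp
      | add c d hc hd => simp only [smul_add, TensorProduct.tmul_add, map_add, hc, hd]
      | tmul c d => simp [TensorProduct.smul_tmul']
  rw [h₁, Coalgebra.coassoc_symm_apply, comulSlice, LinearMap.rTensor_comp]
  rfl

lemma comulSlice_one_tmul_mul (μ : A →ₗ[k] k) (t : A ⊗[k] A) (x : A) :
    comulSlice k μ (((1 : A) ⊗ₜ[k] x) * t) = ((1 : A) ⊗ₜ[k] x) * comulSlice k μ t := by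
  induction t with
  | zero => simp
  | tmul a b => simp [comulSlice]
  | add a b ha hb => simp [mul_add, ha, hb]

lemma comulSlice_mul_one_tmul (μ : A →ₗ[k] k) (t : A ⊗[k] A) (x : A) :
    comulSlice k μ (t * ((1 : A) ⊗ₜ[k] x)) = comulSlice k μ t * ((1 : A) ⊗ₜ[k] x) := by
  induction t with
  | zero => simp
  | tmul a b => simp [comulSlice]
  | add a b ha hb => simp [add_mul, ha, hb]

lemma VPSet_subset_NPSet {P : A} (hP : IsRightGroupLikeProjection k P) :
    VPSet k P ⊆ NPSet k P := by
  intro v hv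
  obtain ⟨μ, rfl⟩ := (mem_VPSet_iff k).1 hv
  constructor
  · change _ * _ = _
    rw [comul_leftSlice_comul, ← comulSlice_one_tmul_mul, hP.2.2.2]
    rfl
  · change _ * _ = _
    rw [comul_leftSlice_comul, ← comulSlice_mul_one_tmul, hP.2.2.1]
    rfl

lemma one_mem_NPSet (P : A) : (1 : A) ∈ NPSet k P := by
  constructor <;> simp [NPlSet, NPrSet, Algebra.TensorProduct.one_def]

/-- The map `a ⊗ b ↦ m (a ⊗ b₁) ⊗ b₂`. -/
def contractComul (m : A ⊗[k] A →ₗ[k] A) : A ⊗[k] A →ₗ[k] A ⊗[k] A :=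
  m.rTensor A ∘ₗ (TensorProduct.assoc k A A A).symm.toLinearMap ∘ₗ Coalgebra.comul.lTensor A

lemma contractComul_comul {m : A ⊗[k] A →ₗ[k] A}
    (hm : m ∘ₗ Coalgebra.comul = Algebra.linearMap k A ∘ₗ Coalgebra.counit) (x : A) :
    contractComul k m (Coalgebra.comul (R := k) x) = (1 : A) ⊗ₜ[k] x := by
  simp only [contractComul, LinearMap.comp_apply, LinearEquiv.coe_coe]
  rw [Coalgebra.coassoc_symm_apply, ← LinearMap.comp_apply, ← LinearMap.rTensor_comp, hm,
    LinearMap.rTensor_comp, LinearMap.comp_apply, Coalgebra.rTensor_counit_comul]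
  simp

/-- The map `a ⊗ b ↦ S a * b`. -/
def antipodeMul : A ⊗[k] A →ₗ[k] A :=
  LinearMap.mul' k A ∘ₗ (HopfAlgebra.antipode k).rTensor A

/-- The map `a ⊗ b ↦ b * s a`. -/
def mulSwap (s : A →ₗ[k] A) : A ⊗[k] A →ₗ[k] A :=
  LinearMap.mul' k A ∘ₗ (TensorProduct.comm k A A).toLinearMap ∘ₗ s.rTensor A

lemma contractComul_antipodeMul_tmul (a b : A) :
    contractComul k (antipodeMul k) (a ⊗ₜ[k] b) =
      (HopfAlgebra.antipode k a ⊗ₜ[k] (1 : A)) * Coalgebra.comul (R := k) b := by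
  simp only [contractComul, LinearMap.comp_apply, LinearEquiv.coe_coe, LinearMap.lTensor_tmul]
  induction Coalgebra.comul (R := k) b with
  | zero => simp
  | tmul c d => simp [antipodeMul]
  | add c d hc hd => simp only [TensorProduct.tmul_add, map_add, hc, hd, mul_add]

lemma contractComul_mulSwap_tmul (s : A →ₗ[k] A) (a b : A) :
    contractComul k (mulSwap k s) (a ⊗ₜ[k] b) =
      Coalgebra.comul (R := k) b * (s a ⊗ₜ[k] (1 : A)) := by
  simp only [contractComul, LinearMap.comp_apply, LinearEquiv.coe_coe, LinearMap.lTensor_tmul]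
  induction Coalgebra.comul (R := k) b with
  | zero => simp
  | tmul c d => simp [mulSwap]
  | add c d hc hd => simp only [TensorProduct.tmul_add, map_add, hc, hd, add_mul]

lemma contractComul_antipodeMul_mul (t : A ⊗[k] A) (p : A) :
    contractComul k (antipodeMul k) (t * ((1 : A) ⊗ₜ[k] p)) =
      contractComul k (antipodeMul k) t * Coalgebra.comul (R := k) p := by
  induction t with
  | zero => simp
  | tmul a b => simp [contractComul_antipodeMul_tmul, mul_assoc]
  | add a b ha hb => simp [add_mul, ha, hb]

lemma contractComul_mulSwap_mul (s : A →ₗ[k] A) (t : A ⊗[k] A) (p : A) :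
    contractComul k (mulSwap k s) (((1 : A) ⊗ₜ[k] p) * t) =
      Coalgebra.comul (R := k) p * contractComul k (mulSwap k s) t := by
  induction t with
  | zero => simp
  | tmul a b => simp [contractComul_mulSwap_tmul, mul_assoc]
  | add a b ha hb => simp [mul_add, ha, hb]

/-- The inverse `s` of the antipode satisfies `x₂ * s x₁ = ε(x)`. -/
lemma mulSwap_comp_comul {s : A →ₗ[k] A}
    (hs : ∀ a, HopfAlgebra.antipode k (s a) = a)
    (hinj : Function.Injective (HopfAlgebra.antipode k : A →ₗ[k] A)) :
    mulSwap k s ∘ₗ Coalgebra.comul = Algebra.linearMap k A ∘ₗ Coalgebra.counit := by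
  ext x
  apply hinj
  have h : ∀ t : A ⊗[k] A, HopfAlgebra.antipode k (mulSwap k s t) =
      LinearMap.mul' k A ((HopfAlgebra.antipode k).lTensor A t) := by
    intro t
    induction t with
    | zero => simp
    | tmul a b => simp [mulSwap, HopfAlgebra.antipode_mul_antidistrib, hs]
    | add a b ha hb => simp only [map_add, ha, hb]
  rw [LinearMap.comp_apply, h]
  simp [Algebra.algebraMap_eq_smul_one]

lemma one_tmul_mul_comul_of_mem_NPrSet {P x : A} (hx : x ∈ NPrSet k P) :
    ((1 : A) ⊗ₜ[k] x) * Coalgebra.comul (R := k) P =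
      (HopfAlgebra.antipode k x ⊗ₜ[k] (1 : A)) * Coalgebra.comul (R := k) P := by
  have hm : antipodeMul k ∘ₗ Coalgebra.comul =
      Algebra.linearMap k A ∘ₗ Coalgebra.counit := by
    rw [← HopfAlgebra.mul_antipode_rTensor_comul]
    rfl
  rw [← contractComul_comul k hm, ← contractComul_antipodeMul_mul,
    ← contractComul_antipodeMul_tmul]
  exact congrArg _ hx

lemma comul_mul_one_tmul_of_mem_NPlSet {s : A →ₗ[k] A}
    (hs : ∀ a, HopfAlgebra.antipode k (s a) = a)
    (hinj : Function.Injective (HopfAlgebra.antipode k : A →ₗ[k] A))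
    {P x : A} (hx : x ∈ NPlSet k P) :
    Coalgebra.comul (R := k) P * ((1 : A) ⊗ₜ[k] x) =
      Coalgebra.comul (R := k) P * (s x ⊗ₜ[k] (1 : A)) := by
  rw [← contractComul_comul k (mulSwap_comp_comul k hs hinj), ← contractComul_mulSwap_mul,
    ← contractComul_mulSwap_tmul]
  exact congrArg _ hx

lemma mul_mem_VPSet_of_mem_NPrSet {P x v : A} (hx : x ∈ NPrSet k P) (hv : v ∈ VPSet k P) :
    x * v ∈ VPSet k P := by
  obtain ⟨μ, rfl⟩ := (mem_VPSet_iff k).1 hv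
  rw [← leftSlice_one_tmul_mul, one_tmul_mul_comul_of_mem_NPrSet k hx, leftSlice_tmul_one_mul]
  exact ⟨_, rfl⟩

lemma mul_mem_VPSet_of_mem_NPlSet
    (hS : Function.Bijective (HopfAlgebra.antipode (R := k) : A →ₗ[k] A))
    {P x v : A} (hx : x ∈ NPlSet k P) (hv : v ∈ VPSet k P) :
    v * x ∈ VPSet k P := by
  have hs := (LinearEquiv.ofBijective _ hS).apply_symm_apply
  obtain ⟨μ, rfl⟩ := (mem_VPSet_iff k).1 hv
  rw [← leftSlice_mul_one_tmul, comul_mul_one_tmul_of_mem_NPlSet k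
    (s := (LinearEquiv.ofBijective _ hS).symm.toLinearMap) hs hS.1 hx, leftSlice_mul_tmul_one]
  exact ⟨_, rfl⟩

/-- `Δ(P)` lies in `A ⊗ V_P`. -/
lemma exists_comul_eq_sum_tmul_mem_VPSet (P : A) :
    ∃ (ι : Set A) (I : Finset ι) (a b : ι → A), (∀ i, b i ∈ VPSet k P) ∧
      Coalgebra.comul (R := k) P = ∑ i ∈ I, a i ⊗ₜ[k] b i := by
  classical
  let B := Module.Basis.ofVectorSpace k A
  obtain ⟨c, hc⟩ := TensorProduct.eq_repr_basis_left B (Coalgebra.comul (R := k) P)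
  refine ⟨_, c.support, B, c, fun i => ⟨B.coord i, ?_⟩, hc.symm⟩
  change c i = leftSlice k (B.coord i) _
  rw [← hc, Finsupp.sum, map_sum]
  simp [Finsupp.single_apply, ite_smul]

lemma span_mul_VPSet {P : A} (hP : IsRightGroupLikeProjection k P) :
    Submodule.span k {z : A | ∃ v ∈ VPSet k P, ∃ w ∈ VPSet k P, z = v * w} =
      Submodule.span k (VPSet k P) := by
  apply le_antisymm
  · apply Submodule.span_mono
    rintro _ ⟨v, hv, w, hw, rfl⟩
    exact mul_mem_VPSet_of_mem_NPrSet k (VPSet_subset_NPSet k hP hv).2 hw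
  · rw [Submodule.span_le]
    intro v hv
    obtain ⟨μ, rfl⟩ := (mem_VPSet_iff k).1 hv
    obtain ⟨ι, I, a, b, hb, hΔ⟩ := exists_comul_eq_sum_tmul_mem_VPSet k P
    have hidem := Bialgebra.comul_mul (R := k) P P
    rw [hP.2.1] at hidem
    rw [hidem, hΔ, Finset.sum_mul_sum, map_sum]
    refine Submodule.sum_mem _ fun i _ => ?_
    rw [map_sum]
    refine Submodule.sum_mem _ fun j _ => ?_
    rw [Algebra.TensorProduct.tmul_mul_tmul, leftSlice_tmul]
    exact Submodule.smul_mem _ _ (Submodule.subset_span ⟨_, hb i, _, hb j, rfl⟩)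

/-- Theorem: `V_P` is a right ideal in `N_P^l`, a left ideal in `N_P^r`, a two-sided
ideal in `N_P`, and `V_P² = V_P`. Moreover `V_P = N_P` (equivalently `V_P = N_P^l`,
equivalently `V_P = N_P^r`) iff `1 ∈ V_P`, in which case `N_P^l = N_P = N_P^r`. -/
theorem statement10
    (hS : Function.Bijective (HopfAlgebra.antipode (R := k) : A →ₗ[k] A))
    (P : A) (hP : IsRightGroupLikeProjection k P) :
    (∀ v ∈ VPSet k P, ∀ x ∈ NPlSet k P, v * x ∈ VPSet k P) ∧
    (∀ x ∈ NPrSet k P, ∀ v ∈ VPSet k P, x * v ∈ VPSet k P) ∧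
    (∀ x ∈ NPSet k P, ∀ v ∈ VPSet k P, x * v ∈ VPSet k P ∧ v * x ∈ VPSet k P) ∧
    (Submodule.span k {z : A | ∃ v ∈ VPSet k P, ∃ w ∈ VPSet k P, z = v * w} =
      Submodule.span k (VPSet k P)) ∧
    (VPSet k P = NPSet k P ↔ (1 : A) ∈ VPSet k P) ∧
    (VPSet k P = NPlSet k P ↔ (1 : A) ∈ VPSet k P) ∧
    (VPSet k P = NPrSet k P ↔ (1 : A) ∈ VPSet k P) ∧
    ((1 : A) ∈ VPSet k P → NPlSet k P = NPSet k P ∧ NPrSet k P = NPSet k P) := by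
  have hl : (1 : A) ∈ VPSet k P → NPlSet k P ⊆ VPSet k P := fun h x hx => by
    simpa using mul_mem_VPSet_of_mem_NPlSet k hS hx h
  have hr : (1 : A) ∈ VPSet k P → NPrSet k P ⊆ VPSet k P := fun h x hx => by
    simpa using mul_mem_VPSet_of_mem_NPrSet k hx h
  have hV := VPSet_subset_NPSet k hP
  have h1 := one_mem_NPSet k P
  exact ⟨fun v hv x hx => mul_mem_VPSet_of_mem_NPlSet k hS hx hv,
    fun x hx v hv => mul_mem_VPSet_of_mem_NPrSet k hx hv,
    fun x hx v hv => ⟨mul_mem_VPSet_of_mem_NPrSet k hx.2 hv,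
      mul_mem_VPSet_of_mem_NPlSet k hS hx.1 hv⟩,
    span_mul_VPSet k hP,
    ⟨fun h => h ▸ h1, fun h => hV.antisymm fun _ hx => hl h hx.1⟩,
    ⟨fun h => h ▸ h1.1, fun h => Set.Subset.antisymm (fun _ hx => (hV hx).1) (hl h)⟩,
    ⟨fun h => h ▸ h1.2, fun h => Set.Subset.antisymm (fun _ hx => (hV hx).2) (hr h)⟩,
    fun h => ⟨((hl h).trans hV).antisymm Set.inter_subset_left,
      ((hr h).trans hV).antisymm Set.inter_subset_right⟩⟩
end
end

section
/- Let A be a Hopf algebra over a field k with bijective antipode and let P ∈ A be a right group-like projection. Then for every x ∈ N_P one has xP = ε(x)P = Px; consequently P is a minimal central idempotent of N_P and ker(ε|_{N_P}) = (1 − P)·N_P. In particular, if P₁, P₂ are right group-like projections with N_{P₁} = N_{P₂}, then P₁ = P₂. -/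
open scoped TensorProduct

noncomputable section

variable (k : Type*) [Field k] {A : Type*} [Ring A] [HopfAlgebra k A]

/-- The algebra homomorphism `ε ⊗ id : A ⊗ A → k ⊗ A ≃ A`. -/
def counitTensorId (A : Type*) [Ring A] [HopfAlgebra k A] : A ⊗[k] A →ₐ[k] A :=
  (Algebra.TensorProduct.lid k A).toAlgHom.comp
    (Algebra.TensorProduct.map (Bialgebra.counitAlgHom k A) (AlgHom.id k A))

lemma counitTensorId_tmul (a b : A) :
    counitTensorId k A (a ⊗ₜ[k] b) = Coalgebra.counit (R := k) a • b := by
  simp [counitTensorId]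

lemma counitTensorId_comul (x : A) :
    counitTensorId k A (Coalgebra.comul (R := k) x) = x := by
  have h := congrArg (TensorProduct.lid k A) (Coalgebra.rTensor_counit_comul (R := k) x)
  rw [TensorProduct.lid_tmul, one_smul] at h
  exact h

variable {k}

lemma mul_eq_counit_smul_of_mem_NPrSet {P x : A} (hx : x ∈ NPrSet k P) :
    x * P = Coalgebra.counit (R := k) x • P := by
  have h := congrArg (counitTensorId k A) hx
  simpa [counitTensorId_tmul, counitTensorId_comul] using h

lemma mul_eq_counit_smul_of_mem_NPlSet {P x : A} (hx : x ∈ NPlSet k P) :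
    P * x = Coalgebra.counit (R := k) x • P := by
  have h := congrArg (counitTensorId k A) hx
  simpa [counitTensorId_tmul, counitTensorId_comul] using h

lemma IsRightGroupLikeProjection.mem_NPSet {P : A} (hP : IsRightGroupLikeProjection k P) :
    P ∈ NPSet k P :=
  ⟨hP.2.2.2, hP.2.2.1⟩

lemma IsRightGroupLikeProjection.counit_eq_one {P : A}
    (hP : IsRightGroupLikeProjection k P) : Coalgebra.counit (R := k) P = 1 := by
  have h := mul_eq_counit_smul_of_mem_NPrSet hP.mem_NPSet.2
  rw [hP.2.1] at h
  exact smul_left_injective k hP.1 (by simpa using h.symm)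

lemma IsRightGroupLikeProjection.eq_of_NPSet_eq {P₁ P₂ : A}
    (h₁ : IsRightGroupLikeProjection k P₁) (h₂ : IsRightGroupLikeProjection k P₂)
    (h : NPSet k P₁ = NPSet k P₂) : P₁ = P₂ := by
  have h₁₂ : P₁ ∈ NPSet k P₂ := h ▸ h₁.mem_NPSet
  have h₂₁ : P₂ ∈ NPSet k P₁ := h ▸ h₂.mem_NPSet
  calc P₁ = P₁ * P₂ := by
        rw [mul_eq_counit_smul_of_mem_NPlSet h₂₁.1, h₂.counit_eq_one, one_smul]
    _ = P₂ := by
        rw [mul_eq_counit_smul_of_mem_NPrSet h₁₂.2, h₁.counit_eq_one, one_smul]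

variable (k)

/-- Theorem: for every `x ∈ N_P` one has `xP = ε(x)P = Px`; `P` is a minimal central
idempotent of `N_P` and `ker(ε|_{N_P}) = (1 - P)N_P`; and right group-like projections
with the same `N_P` coincide. -/
theorem statement11
    (hS : Function.Bijective (HopfAlgebra.antipode (R := k) : A →ₗ[k] A))
    (P : A) (hP : IsRightGroupLikeProjection k P) :
    (∀ x ∈ NPSet k P, x * P = Coalgebra.counit (R := k) x • P ∧
      P * x = Coalgebra.counit (R := k) x • P) ∧
    -- `P` is a minimal central idempotent of `N_P`
    (P ∈ NPSet k P ∧ P * P = P ∧ (∀ x ∈ NPSet k P, P * x = x * P)) ∧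
    (∀ e ∈ NPSet k P, e * e = e → (∀ x ∈ NPSet k P, e * x = x * e) → e * P = e →
      e = 0 ∨ e = P) ∧
    -- `ker(ε|_{N_P}) = (1 - P)·N_P`
    (∀ x ∈ NPSet k P, (Coalgebra.counit (R := k) x = 0 ↔
      ∃ y ∈ NPSet k P, x = (1 - P) * y)) ∧
    -- injectivity of `P ↦ N_P`
    (∀ P₁ P₂ : A, IsRightGroupLikeProjection k P₁ → IsRightGroupLikeProjection k P₂ →
      NPSet k P₁ = NPSet k P₂ → P₁ = P₂) := by
  refine ⟨fun x hx => ⟨mul_eq_counit_smul_of_mem_NPrSet hx.2,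
      mul_eq_counit_smul_of_mem_NPlSet hx.1⟩,
    ⟨hP.mem_NPSet, hP.2.1, fun x hx => ?_⟩, fun e he hee _ heP => ?_,
    fun x hx => ⟨fun h0 => ⟨x, hx, ?_⟩, ?_⟩, fun _ _ h₁ h₂ => h₁.eq_of_NPSet_eq h₂⟩
  · rw [mul_eq_counit_smul_of_mem_NPrSet hx.2, mul_eq_counit_smul_of_mem_NPlSet hx.1]
  · have hε : IsIdempotentElem (Coalgebra.counit (R := k) e) := by
      rw [IsIdempotentElem, ← Bialgebra.counit_mul, hee]
    have he' : e = Coalgebra.counit (R := k) e • P :=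
      heP.symm.trans (mul_eq_counit_smul_of_mem_NPrSet he.2)
    rcases IsIdempotentElem.iff_eq_zero_or_one.mp hε with h | h
    · left
      rw [he', h, zero_smul]
    · right
      rw [he', h, one_smul]
  · rw [sub_mul, one_mul, mul_eq_counit_smul_of_mem_NPlSet hx.1, h0, zero_smul, sub_zero]
  · rintro ⟨y, -, rfl⟩
    rw [Bialgebra.counit_mul, map_sub, Bialgebra.counit_one, hP.counit_eq_one, sub_self, zero_mul]
end
end
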